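/- arXiv:1803.10123 — 2 statements merged into one kernel-verified Lean document; each statement's English description precedes it below -/
import Mathlib

section
/- Let f : ℝ → ℝ be continuously differentiable and concave, μ ∈ ℝ, σ > 0, and ε ~ N(0,1). Then E[f'(μ + σε) · ε] ≤ 0. -/
open MeasureTheory ProbabilityTheory

/-! Since `f'` is antitone, `f' (μ + σ x) * x ≤ f' μ * x` for either sign of `x`, and the right-hand
side has mean zero when `x` is centred. Since `f` may fail to be differentiable at `μ` itself, the
right derivative, which exists and is antitone everywhere, takes the place of `f'`. -/

theorem mul_self_le_map_zero_mul_of_antitone {R : Type*} [Ring R] [LinearOrder R]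
    [IsOrderedRing R] {g : R → R} (hg : Antitone g) (a : R) : g a * a ≤ g 0 * a := by
  rcases le_total 0 a with ha | ha
  · exact mul_le_mul_of_nonneg_right (hg ha) ha
  · exact mul_le_mul_of_nonpos_right (hg ha) ha

theorem antitoneOn_rightDeriv_of_concaveOn {S : Set ℝ} {f : ℝ → ℝ} (hf : ConcaveOn ℝ S f) :
    AntitoneOn (fun x ↦ derivWithin f (Set.Ioi x) x) (interior S) := by
  simpa only [derivWithin.fun_neg, Pi.neg_def, neg_neg] using hf.neg.monotoneOn_rightDeriv.neg

section Centered

variable {Ω : Type*} [MeasurableSpace Ω] {P : Measure Ω} {X : Ω → ℝ}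

theorem integral_antitone_comp_mul_self_nonpos {g : ℝ → ℝ} (hg : Antitone g)
    (hX : Integrable X P) (hX_mean : ∫ ω, X ω ∂P = 0)
    (hint : Integrable (fun ω ↦ g (X ω) * X ω) P) :
    ∫ ω, g (X ω) * X ω ∂P ≤ 0 :=
  calc ∫ ω, g (X ω) * X ω ∂P
      ≤ ∫ ω, g 0 * X ω ∂P :=
        integral_mono hint (hX.const_mul _) fun ω ↦ mul_self_le_map_zero_mul_of_antitone hg (X ω)
    _ = 0 := by rw [integral_const_mul, hX_mean, mul_zero]

theorem stmt3_general {f : ℝ → ℝ} (hconc : ConcaveOn ℝ Set.univ f) {μ σ : ℝ} (hσ : 0 ≤ σ)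
    (hX : Integrable X P) (hX_mean : ∫ ω, X ω ∂P = 0)
    (hdiff : ∀ᵐ ω ∂P, DifferentiableAt ℝ f (μ + σ * X ω))
    (hint : Integrable (fun ω ↦ deriv f (μ + σ * X ω) * X ω) P) :
    ∫ ω, deriv f (μ + σ * X ω) * X ω ∂P ≤ 0 := by
  let rightDeriv (x : ℝ) : ℝ := derivWithin f (Set.Ioi x) x
  have rightDeriv_antitone : Antitone rightDeriv := by
    simpa only [interior_univ, antitoneOn_univ] using antitoneOn_rightDeriv_of_concaveOn hconc
  have comp_antitone : Antitone fun x ↦ rightDeriv (μ + σ * x) :=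
    rightDeriv_antitone.comp_monotone ((monotone_mul_left_of_nonneg hσ).const_add μ)
  have deriv_ae_eq : (fun ω ↦ deriv f (μ + σ * X ω) * X ω) =ᵐ[P]
      fun ω ↦ rightDeriv (μ + σ * X ω) * X ω := by
    filter_upwards [hdiff] with ω hω
    rw [← hω.derivWithin (uniqueDiffWithinAt_Ioi _)]
  rw [integral_congr_ae deriv_ae_eq]
  exact integral_antitone_comp_mul_self_nonpos comp_antitone hX hX_mean (hint.congr deriv_ae_eq)

end Centered

/-- For a continuously differentiable concave `f : ℝ → ℝ`, `μ ∈ ℝ`, `σ > 0`, and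
`ε ~ N(0,1)`, we have `E[f'(μ + σε) · ε] ≤ 0`. -/
theorem stmt3 (f : ℝ → ℝ) (hf : ContDiff ℝ 1 f)
    (hconc : ConcaveOn ℝ Set.univ f) (μ σ : ℝ) (hσ : 0 < σ)
    (hint : Integrable (fun ε : ℝ => deriv f (μ + σ * ε) * ε) (gaussianReal 0 1)) :
    (∫ ε : ℝ, deriv f (μ + σ * ε) * ε ∂(gaussianReal 0 1)) ≤ 0 :=
  stmt3_general hconc hσ.le IsGaussian.integrable_fun_id integral_id_gaussianReal
    (.of_forall fun _ ↦ hf.differentiable one_ne_zero _) hint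
end

section
/- Fix v > 0, m > 0 and define the recursion v_{n+1} = g(v_n) where g(v) = v·√(1 + (v·(mv)/2)²) − v²·(mv)/2, starting from v_1 = v. Then v_n → 0 as n → ∞. -/
open Filter

/-!
Since `√(1 + t²) - t = exp (-arsinh t)`, the recursion multiplies `v n` by
`exp (-arsinh (m (v n)² / 2))`, which lies in `(0, 1)` unless `v n = 0`. A continuous map of a
proper space which brings every other point strictly closer to a fixed point `p` has all its orbits
converging to `p`: the distances to `p` decrease to some `r`, and a cluster point `y` of the orbit
satisfies `dist y p = r = dist (f y) p`, which forces `y = p`.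
-/

theorem tendsto_fixedPt_of_dist_lt {X : Type*} [MetricSpace X] [ProperSpace X] {f : X → X} {p : X}
    (hf : Continuous f) (hp : Function.IsFixedPt f p) (hlt : ∀ x ≠ p, dist (f x) p < dist x p)
    {u : ℕ → X} (hu : ∀ n, u (n + 1) = f (u n)) : Tendsto u atTop (nhds p) := by
  have dist_le (x : X) : dist (f x) p ≤ dist x p := by
    rcases eq_or_ne x p with rfl | hx
    · rw [hp.eq]
    · exact (hlt x hx).le
  have anti : Antitone fun n ↦ dist (u n) p :=
    antitone_nat_of_succ_le fun n ↦ hu n ▸ dist_le (u n)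
  obtain ⟨r, hr⟩ : ∃ r, Tendsto (fun n ↦ dist (u n) p) atTop (nhds r) :=
    ⟨_, tendsto_atTop_ciInf anti ⟨0, Set.forall_mem_range.2 fun _ ↦ dist_nonneg⟩⟩
  obtain ⟨y, -, φ, hφ, hy⟩ :=
    (isCompact_closedBall p (dist (u 0) p)).tendsto_subseq (x := u) fun n ↦ anti n.zero_le
  have dist_y : dist y p = r :=
    tendsto_nhds_unique (hy.dist tendsto_const_nhds) (hr.comp hφ.tendsto_atTop)
  have dist_fy : dist (f y) p = r := by
    have hfy : Tendsto (fun k ↦ u (φ k + 1)) atTop (nhds (f y)) := by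
      simpa only [hu, Function.comp_def] using (hf.tendsto y).comp hy
    exact tendsto_nhds_unique (hfy.dist tendsto_const_nhds)
      (hr.comp ((tendsto_add_atTop_nat 1).comp hφ.tendsto_atTop))
  have y_eq : y = p := by
    by_contra hne
    exact (hlt y hne).ne (dist_fy.trans dist_y.symm)
  have r_eq : r = 0 := by rw [← dist_y, y_eq, dist_self]
  exact tendsto_iff_dist_tendsto_zero.2 (r_eq ▸ hr)

theorem sqrt_one_add_sq_sub_self (t : ℝ) : √(1 + t ^ 2) - t = Real.exp (-Real.arsinh t) := by
  rw [← Real.arsinh_neg, Real.exp_arsinh, neg_sq]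
  ring

/-- The BGD update of a standard deviation `σ`, where `a` stands for the
gradient term `a_n`; the strongly convex recursion is the case `a = m * σ`. -/
noncomputable def bgdStdUpdate (a σ : ℝ) : ℝ :=
  σ * √(1 + (σ * a / 2) ^ 2) - σ ^ 2 * a / 2

theorem bgdStdUpdate_eq_mul_exp (a σ : ℝ) :
    bgdStdUpdate a σ = σ * Real.exp (-Real.arsinh (σ * a / 2)) := by
  rw [← sqrt_one_add_sq_sub_self, bgdStdUpdate]
  ring

theorem abs_bgdStdUpdate_lt {a σ : ℝ} (h : 0 < σ * a) : |bgdStdUpdate a σ| < |σ| := by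
  have hσ : 0 < |σ| := abs_pos.2 (left_ne_zero_of_mul h.ne')
  have exp_lt_one : Real.exp (-Real.arsinh (σ * a / 2)) < 1 :=
    Real.exp_lt_one_iff.2 (neg_neg_of_pos (Real.arsinh_pos_iff.2 (half_pos h)))
  rw [bgdStdUpdate_eq_mul_exp, abs_mul, Real.abs_exp]
  exact mul_lt_of_lt_one_right hσ exp_lt_one

theorem stmt8_general {m : ℝ} (hm : 0 < m) {v : ℕ → ℝ}
    (hrec : ∀ n, v (n + 1) = bgdStdUpdate (m * v n) (v n)) : Tendsto v atTop (nhds 0) := by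
  refine tendsto_fixedPt_of_dist_lt (f := fun σ ↦ bgdStdUpdate (m * σ) σ) ?_ ?_ ?_ hrec
  · unfold bgdStdUpdate
    fun_prop
  · simp [Function.IsFixedPt, bgdStdUpdate]
  · intro σ hσ
    have h : 0 < σ * (m * σ) := by
      rw [mul_left_comm]
      exact mul_pos hm (mul_self_pos.2 hσ)
    simpa only [Real.dist_0_eq_abs] using abs_bgdStdUpdate_lt h

/-- With `a_n = m v_n` exactly, the BGD standard-deviation recursion
`v_{n+1} = v_n √(1 + (v_n·(m v_n)/2)²) − v_n²·(m v_n)/2` started at `v₀ > 0`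
converges to `0`. -/
theorem stmt8 (v₀ m : ℝ) (hv₀ : 0 < v₀) (hm : 0 < m) (v : ℕ → ℝ)
    (hinit : v 0 = v₀)
    (hrec : ∀ n, v (n + 1) =
      v n * Real.sqrt (1 + (v n * (m * v n) / 2) ^ 2) - (v n) ^ 2 * (m * v n) / 2) :
    Tendsto v atTop (nhds 0) :=
  stmt8_general hm hrec
end
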